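/- arXiv:1903.11939 — 4 statements merged into one kernel-verified Lean document; each statement's English description precedes it below -/
import Mathlib

section
/- Let 0 < α ≤ 1. Then for every real r, the Mittag-Leffler function E_α is differentiable at r and its derivative satisfies E_α'(r) = (1/α) · E_{α,α}(r). -/
open Real

/-- The Mittag-Leffler function `E_α(r) = ∑ r^k / Γ(1+kα)`. -/
noncomputable def mittagLeffler (α r : ℝ) : ℝ :=
  ∑' k : ℕ, r ^ k / Real.Gamma (1 + k * α)

/-- The Mittag-Leffler function `E_{α,α}(r) = ∑ r^k / Γ(α+kα)`. -/
noncomputable def mittagLefflerAA (α r : ℝ) : ℝ :=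
  ∑' k : ℕ, r ^ k / Real.Gamma (α + k * α)

/-!
Cutting the Euler integral off at `M` gives `Γ(x) ≥ M ^ (x - 1) * exp (-M)`; as `M` is arbitrary,
`Γ` outgrows every exponential, so the Mittag-Leffler series converge everywhere and may be
differentiated term by term. The functional equation at `s = (k + 1) α` turns the differentiated
coefficient `(k + 1) / Γ(1 + s)` into `(k + 1) / (s Γ(s)) = 1 / (α Γ(α + k α))`.
-/

open Asymptotics Filter MeasureTheory

section PowerSeries

variable {𝕜 F : Type*} [NontriviallyNormedField 𝕜] [NormedAddCommGroup F] [NormedSpace 𝕜 F]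
  [CompleteSpace F]

theorem hasDerivAt_of_hasFPowerSeriesOnBall {f : 𝕜 → F} {p : FormalMultilinearSeries 𝕜 𝕜 F}
    {x y : 𝕜} {R : ENNReal} (hf : HasFPowerSeriesOnBall f p x R) (hy : ‖y‖ₑ < R) :
    HasDerivAt f (∑' n, y ^ n • (n + 1) • p.coeff (n + 1)) (x + y) := by
  have hy' : y ∈ Metric.eball 0 R := by simpa using hy
  have hderiv : HasSum (fun n => y ^ n • (n + 1) • p.coeff (n + 1)) (deriv f (x + y)) := by
    simpa using (hf.fderiv.hasSum hy').mapL (ContinuousLinearMap.apply 𝕜 F 1)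
  rw [hderiv.tsum_eq]
  exact (hf.hasFDerivAt hy).differentiableAt.hasDerivAt

theorem hasDerivAt_tsum_pow_smul {a : ℕ → F} {x ρ : 𝕜} (ha : Summable fun n => ρ ^ n • a n)
    (hx : ‖x‖ < ‖ρ‖) :
    HasDerivAt (fun y => ∑' n, y ^ n • a n) (∑' n, x ^ n • (n + 1) • a (n + 1)) x := by
  let p : FormalMultilinearSeries 𝕜 𝕜 F := fun n =>
    ContinuousMultilinearMap.mkPiRing 𝕜 (Fin n) (a n)
  have hcoeff (n : ℕ) : p.coeff n = a n := by simp [p, FormalMultilinearSeries.coeff]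
  have hsum : p.sum = fun y => ∑' n, y ^ n • a n := by
    ext y
    simp only [FormalMultilinearSeries.sum, FormalMultilinearSeries.apply_eq_pow_smul_coeff, hcoeff]
  have hradius : ‖ρ‖ₑ ≤ p.radius :=
    p.le_radius_of_tendsto (l := 0) <| by
      simpa [p, norm_smul, mul_comm] using ha.tendsto_atTop_zero.norm
  have hxp : ‖x‖ₑ < p.radius := (ENNReal.coe_lt_coe.2 hx).trans_le hradius
  simpa only [hsum, hcoeff, zero_add] using
    hasDerivAt_of_hasFPowerSeriesOnBall (p.hasFPowerSeriesOnBall (pos_of_gt hxp)) hxp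

end PowerSeries

theorem rpow_mul_exp_neg_le_Gamma {M x : ℝ} (hM : 0 ≤ M) (hx : 1 ≤ x) :
    M ^ (x - 1) * exp (-M) ≤ Gamma x := by
  have hx0 : 0 < x := one_pos.trans_le hx
  have hint := GammaIntegral_convergent hx0
  have hsub : Set.Ioi M ⊆ Set.Ioi 0 := Set.Ioi_subset_Ioi hM
  calc M ^ (x - 1) * exp (-M)
      = ∫ t in Set.Ioi M, exp (-t) * M ^ (x - 1) := by
        rw [integral_mul_const, integral_exp_neg_Ioi, mul_comm]
    _ ≤ ∫ t in Set.Ioi M, exp (-t) * t ^ (x - 1) := by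
        refine setIntegral_mono_on ((integrableOn_exp_neg_Ioi M).mul_const _)
          (hint.mono_set hsub) measurableSet_Ioi fun t (ht : M < t) => ?_
        gcongr
    _ ≤ ∫ t in Set.Ioi 0, exp (-t) * t ^ (x - 1) := by
        refine setIntegral_mono_set hint ?_ hsub.eventuallyLE
        filter_upwards [ae_restrict_mem measurableSet_Ioi] with t (ht : 0 < t)
        exact mul_nonneg (exp_pos _).le (rpow_nonneg ht.le _)
    _ = Gamma x := (Gamma_eq_integral hx0).symm

theorem isBigO_exp_mul_Gamma (c : ℝ) : (fun x => exp (c * x)) =O[atTop] Gamma := by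
  refine IsBigO.of_bound (exp (c + exp c)) ?_
  filter_upwards [eventually_ge_atTop 1] with x hx
  have hΓ : exp (c * (x - 1)) * exp (-exp c) ≤ Gamma x := by
    simpa only [exp_mul] using rpow_mul_exp_neg_le_Gamma (exp_pos c).le hx
  calc ‖exp (c * x)‖ = exp (c + exp c) * (exp (c * (x - 1)) * exp (-exp c)) := by
        rw [norm_of_nonneg (exp_pos _).le, ← exp_add, ← exp_add]
        ring_nf
    _ ≤ exp (c + exp c) * ‖Gamma x‖ := by
        gcongr
        exact hΓ.trans (le_norm_self _)

theorem summable_pow_div_Gamma {α : ℝ} (hα : 0 < α) (β r : ℝ) :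
    Summable fun k : ℕ => r ^ k / Gamma (β + k * α) := by
  -- With this rate, `exp (c * k * α) = exp |r| ^ k * exp k` absorbs `|r| ^ k` and leaves `exp k`.
  set c := (|r| + 1) / α with hc
  have hΓ : (fun k : ℕ => exp (c * (β + k * α))) =O[atTop] fun k : ℕ => Gamma (β + k * α) :=
    (isBigO_exp_mul_Gamma c).comp_tendsto <| tendsto_atTop_add_const_left _ β <|
      tendsto_natCast_atTop_atTop.atTop_mul_const hα
  have hr (k : ℕ) : ‖r ^ k * (exp (c * (β + k * α)))⁻¹‖ ≤ exp (-(c * β)) * ‖exp (-(k : ℝ))‖ := by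
    have hexp : |r| ≤ exp |r| := (lt_add_one _).le.trans (add_one_le_exp _)
    calc ‖r ^ k * (exp (c * (β + k * α)))⁻¹‖ = |r| ^ k * exp (-(c * (β + k * α))) := by
          rw [norm_mul, norm_pow, norm_eq_abs, ← exp_neg, norm_of_nonneg (exp_pos _).le]
      _ ≤ exp |r| ^ k * exp (-(c * (β + k * α))) := by gcongr
      _ = exp (-(c * β)) * ‖exp (-(k : ℝ))‖ := by
          rw [norm_of_nonneg (exp_pos _).le, ← exp_nat_mul, ← exp_add, ← exp_add, hc]
          congr 1
          field_simp
          ring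
  have hΓinv := hΓ.inv_rev (.of_forall fun k h => absurd h (exp_ne_zero _))
  exact summable_of_isBigO_nat summable_exp_neg_nat <|
    ((isBigO_refl _ _).mul hΓinv).trans (.of_bound _ (.of_forall hr))

theorem succ_nsmul_inv_Gamma {α : ℝ} (hα : α ≠ 0) (k : ℕ) :
    (k + 1) • (Gamma (1 + (k + 1 : ℕ) * α))⁻¹ = 1 / α * (Gamma (α + k * α))⁻¹ := by
  have hk : (k + 1 : ℝ) ≠ 0 := k.cast_add_one_ne_zero
  have harg : α + k * α = (k + 1) * α := by ring
  rw [nsmul_eq_mul, Nat.cast_succ, add_comm 1, Gamma_add_one (mul_ne_zero hk hα), harg]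
  field_simp

theorem mittagLeffler_hasDerivAt_general {α : ℝ} (hα : 0 < α) (r : ℝ) :
    HasDerivAt (mittagLeffler α) (1 / α * mittagLefflerAA α r) r := by
  have hr : ‖r‖ < ‖|r| + 1‖ := (lt_add_one |r|).trans_le (le_abs_self _)
  have hsummable : Summable fun k : ℕ => (|r| + 1) ^ k • (Gamma (1 + k * α))⁻¹ := by
    simpa only [smul_eq_mul, div_eq_mul_inv] using summable_pow_div_Gamma hα 1 (|r| + 1)
  have hderiv := hasDerivAt_tsum_pow_smul hsummable hr
  simp only [succ_nsmul_inv_Gamma hα.ne', smul_eq_mul, mul_left_comm _ (1 / α),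
    tsum_mul_left] at hderiv
  simp only [← div_eq_mul_inv] at hderiv
  exact hderiv

theorem mittagLeffler_hasDerivAt (α : ℝ) (hα : 0 < α) (hα1 : α ≤ 1) (r : ℝ) :
    HasDerivAt (mittagLeffler α) ((1 / α) * mittagLefflerAA α r) r :=
  mittagLeffler_hasDerivAt_general hα r
end

section
/- Let 0 < α ≤ 1. Then for every real r one has E_α(r) > 0 and E_{α,α}(r) > 0. -/
open Real

/-!
For `0 ≤ a ≤ 1` and `a ≤ b`, the sequence `(a j + b) (a j + b + 1) ⋯ (a j + b + m - 1)` is a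
nonnegative combination of the sequences `(j + 1) ⋯ (j + k)` with `k ≤ m`. The latter have the
generating functions `k! / (1 - x) ^ (k + 1)`, so the generating function `F` of the former
satisfies `F(0)² ≤ F(x) F(-x)` for `|x| < 1`, by Cauchy-Schwarz. By Euler's limit formula for `Γ`,
the entire function `E(r) = ∑ r ^ k / Γ(b + k a)`, with `a > 0`, is a limit of rescaled functions
`F`, whence `1 / Γ(b)² ≤ E(r) E(-r)` for all real `r`. Since `E ≥ 0` on `[0, ∞)`, it is positive
everywhere.
-/

open Filter Polynomial Topology
open scoped Nat

section RisingFactorials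

variable {R : Type*} [CommRing R]

/-- The rising factorial `(a x + b)(a x + b + 1) ⋯ (a x + b + m - 1)` of an affine function, as a
polynomial in `x`. -/
noncomputable def affinePochhammer (a b : R) (m : ℕ) : R[X] :=
  (ascPochhammer R m).comp (C a * X + C b)

lemma affinePochhammer_zero (a b : R) : affinePochhammer a b 0 = 1 := by
  simp [affinePochhammer]

lemma affinePochhammer_succ (a b : R) (m : ℕ) :
    affinePochhammer a b (m + 1) = affinePochhammer a b m * (C a * X + C (b + m)) := by
  simp [affinePochhammer, ascPochhammer_succ_right, add_assoc]

lemma eval_affinePochhammer (a b x : R) (m : ℕ) :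
    (affinePochhammer a b m).eval x = ∏ i ∈ Finset.range m, (b + x * a + i) := by
  induction m with
  | zero => simp [affinePochhammer_zero]
  | succ m ih =>
    rw [affinePochhammer_succ, eval_mul, ih, Finset.prod_range_succ]
    simp only [eval_add, eval_mul, eval_C, eval_X]
    ring

lemma eval_natCast_affinePochhammer_one_one (k j : ℕ) :
    (affinePochhammer (1 : R) 1 k).eval (j : R) = k ! * (j + k).choose k := by
  have h := congrArg (Nat.cast : ℕ → R) (Nat.ascFactorial_eq_factorial_mul_choose j k)
  rw [Nat.cast_ascFactorial] at h
  simpa [affinePochhammer] using h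

variable [PartialOrder R] [IsOrderedRing R]

variable (R) in
/-- The cone of polynomials that are nonnegative combinations of the rising factorials
`(x + 1) ⋯ (x + k)` with `k ≤ m`. The bound on `k` is what keeps the coefficients nonnegative under
multiplication by an affine factor. -/
noncomputable def risingCone (m : ℕ) : PointedCone R R[X] :=
  PointedCone.hull R (affinePochhammer 1 1 '' Set.Iic m)

lemma affinePochhammer_one_one_mem_risingCone {k m : ℕ} (hk : k ≤ m) :
    affinePochhammer 1 1 k ∈ risingCone R m :=
  Submodule.subset_span ⟨k, hk, rfl⟩

lemma mul_affine_mem_risingCone {a b : R} {m : ℕ} (ha : 0 ≤ a) (hab : a * (m + 1) ≤ b)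
    {p : R[X]} (hp : p ∈ risingCone R m) : p * (C a * X + C b) ∈ risingCone R (m + 1) := by
  induction hp using Submodule.span_induction with
  | mem p hp =>
    obtain ⟨k, hk, rfl⟩ := hp
    have hak : a * (k + 1) ≤ b := le_trans (by gcongr; exact hk) hab
    have expansion : affinePochhammer 1 1 k * (C a * X + C b) =
        a • affinePochhammer 1 1 (k + 1) + (b - a * (k + 1)) • affinePochhammer 1 1 k := by
      simp only [affinePochhammer_succ, smul_eq_C_mul, map_sub, map_mul, map_add, map_natCast,
        map_one]
      ring
    rw [expansion]
    exact add_mem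
      (Submodule.smul_mem _ ⟨a, ha⟩
        (affinePochhammer_one_one_mem_risingCone (Nat.succ_le_succ hk)))
      (Submodule.smul_mem _ ⟨_, sub_nonneg.mpr hak⟩
        (affinePochhammer_one_one_mem_risingCone (Nat.le_succ_of_le hk)))
  | zero => simp
  | add p q _ _ hp hq => rw [add_mul]; exact add_mem hp hq
  | smul c p _ hp => rw [smul_mul_assoc]; exact Submodule.smul_mem _ c hp

lemma affinePochhammer_mem_risingCone {a b : R} (ha : 0 ≤ a) (ha1 : a ≤ 1) (hab : a ≤ b) (m : ℕ) :
    affinePochhammer a b m ∈ risingCone R m := by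
  induction m with
  | zero =>
    rw [affinePochhammer_zero, ← affinePochhammer_zero 1 1]
    exact affinePochhammer_one_one_mem_risingCone le_rfl
  | succ m ih =>
    rw [affinePochhammer_succ]
    refine mul_affine_mem_risingCone ha ?_ ih
    calc a * (m + 1) = a + a * m := by ring
      _ ≤ b + 1 * m := by gcongr
      _ = b + m := by rw [one_mul]

end RisingFactorials

lemma summable_eval_mul_geometric {𝕜 : Type*} [NormedCommRing 𝕜] [HasSummableGeomSeries 𝕜]
    (p : 𝕜[X]) {x : 𝕜} (hx : ‖x‖ < 1) : Summable fun j : ℕ => p.eval (j : 𝕜) * x ^ j := by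
  simp only [eval_eq_sum_range, Finset.sum_mul, mul_assoc]
  exact summable_sum fun i _ => (summable_pow_mul_geometric_of_norm_lt_one i hx).mul_left _

/-- The generating function `∑ p(j) x ^ j` of the values of a polynomial at the natural numbers,
meaningful for `|x| < 1`. -/
noncomputable def valueSeries (p : ℝ[X]) (x : ℝ) : ℝ :=
  ∑' j : ℕ, p.eval (j : ℝ) * x ^ j

lemma valueSeries_add (p q : ℝ[X]) {x : ℝ} (hx : |x| < 1) :
    valueSeries (p + q) x = valueSeries p x + valueSeries q x := by
  simp only [valueSeries, eval_add, add_mul]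
  exact (summable_eval_mul_geometric p hx).tsum_add (summable_eval_mul_geometric q hx)

lemma valueSeries_smul (c : ℝ) (p : ℝ[X]) (x : ℝ) :
    valueSeries (c • p) x = c * valueSeries p x := by
  simp only [valueSeries, eval_smul, smul_eq_mul, mul_assoc, tsum_mul_left]

lemma valueSeries_affinePochhammer_one_one (k : ℕ) {x : ℝ} (hx : |x| < 1) :
    valueSeries (affinePochhammer 1 1 k) x = k ! * (1 / (1 - x) ^ (k + 1)) := by
  simp only [valueSeries, eval_natCast_affinePochhammer_one_one, mul_assoc, tsum_mul_left]
  rw [tsum_choose_mul_geometric_of_norm_lt_one k hx]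

lemma two_mul_le_one_div_pow_add_sq_mul {x : ℝ} (hx : |x| < 1) (n : ℕ) (t : ℝ) :
    2 * t ≤ 1 / (1 - x) ^ n + t ^ 2 * (1 / (1 - -x) ^ n) := by
  obtain ⟨hneg, hpos⟩ := abs_lt.mp hx
  set u := (1 - x) ^ n
  set v := (1 - -x) ^ n
  have hu : 0 < u := pow_pos (by linarith) n
  have hv : 0 < v := pow_pos (by linarith) n
  have huv : u * v ≤ 1 := by
    rw [← mul_pow]
    exact pow_le_one₀ (mul_nonneg (by linarith) (by linarith)) (by nlinarith [sq_nonneg x])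
  have hvu : v ≤ 1 / u := (le_div_iff₀' hu).mpr huv
  calc 2 * t ≤ v + t ^ 2 * (1 / v) := by
        have hsq : v + t ^ 2 * (1 / v) - 2 * t = (v - t) ^ 2 / v := by field_simp; ring
        linarith [div_nonneg (sq_nonneg (v - t)) hv.le]
    _ ≤ 1 / u + t ^ 2 * (1 / v) := by gcongr

-- `p(0)² ≤ F(x) F(-x)` in a form that is linear in `p`, so that it can be checked on generators.
lemma two_mul_eval_zero_le_of_mem_risingCone {m : ℕ} {p : ℝ[X]} (hp : p ∈ risingCone ℝ m) {x : ℝ}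
    (hx : |x| < 1) (t : ℝ) :
    2 * t * p.eval 0 ≤ valueSeries p x + t ^ 2 * valueSeries p (-x) := by
  have hx' : |-x| < 1 := by rwa [abs_neg]
  induction hp using Submodule.span_induction with
  | mem p hp =>
    obtain ⟨k, -, rfl⟩ := hp
    have heval := eval_natCast_affinePochhammer_one_one (R := ℝ) k 0
    rw [Nat.cast_zero, zero_add, Nat.choose_self, Nat.cast_one, mul_one] at heval
    rw [heval, valueSeries_affinePochhammer_one_one k hx,
      valueSeries_affinePochhammer_one_one k hx']
    linear_combination (k ! : ℝ) * two_mul_le_one_div_pow_add_sq_mul hx (k + 1) t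
  | zero => simp [valueSeries]
  | add p q _ _ hp hq =>
    rw [eval_add, valueSeries_add p q hx, valueSeries_add p q hx']
    linarith
  | smul c p _ hp =>
    change 2 * t * ((c : ℝ) • p).eval 0 ≤
      valueSeries ((c : ℝ) • p) x + t ^ 2 * valueSeries ((c : ℝ) • p) (-x)
    rw [eval_smul, smul_eq_mul, valueSeries_smul, valueSeries_smul]
    linear_combination mul_le_mul_of_nonneg_left hp c.2

lemma sq_eval_zero_le_of_mem_risingCone {m : ℕ} {p : ℝ[X]} (hp : p ∈ risingCone ℝ m) {x : ℝ}
    (hx : |x| < 1) : p.eval 0 ^ 2 ≤ valueSeries p x * valueSeries p (-x) := by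
  have hdiscrim : discrim (valueSeries p (-x)) (-(2 * p.eval 0)) (valueSeries p x) ≤ 0 :=
    discrim_le_zero fun t => by
      linarith [two_mul_eval_zero_le_of_mem_risingCone hp hx t]
  rw [discrim] at hdiscrim
  linarith

lemma rpow_mul_add_one_add_le {x s : ℝ} (hx : 0 < x) (hs : 0 ≤ s) :
    x ^ s * (s + (x + 1)) ≤ (x + 1) ^ s * (x + 1) := by
  have hbernoulli : 1 + (s + 1) * (1 / x) ≤ (1 + 1 / x) ^ (s + 1) :=
    one_add_mul_self_le_rpow_one_add (by linarith [one_div_pos.mpr hx]) (by linarith)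
  calc x ^ s * (s + (x + 1)) = x ^ (s + 1) * (1 + (s + 1) * (1 / x)) := by
        rw [rpow_add_one hx.ne']
        field_simp
        ring
    _ ≤ x ^ (s + 1) * (1 + 1 / x) ^ (s + 1) := by gcongr
    _ = (x + 1) ^ (s + 1) := by
        rw [← mul_rpow hx.le (by positivity)]
        congr 1
        field_simp
    _ = (x + 1) ^ s * (x + 1) := rpow_add_one (by positivity) s

lemma gammaSeq_pos {s : ℝ} (hs : 0 < s) {n : ℕ} (hn : 1 ≤ n) : 0 < GammaSeq s n :=
  div_pos (by positivity) (Finset.prod_pos fun i _ => by positivity)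

lemma monotone_gammaSeq {s : ℝ} (hs : 0 < s) : Monotone (GammaSeq s) := by
  refine monotone_nat_of_le_succ fun n => ?_
  rcases n.eq_zero_or_pos with rfl | hn
  · simpa [GammaSeq, zero_rpow hs.ne'] using (gammaSeq_pos hs le_rfl).le
  have hprod : 0 < ∏ j ∈ Finset.range (n + 1), (s + (j : ℝ)) :=
    Finset.prod_pos fun j _ => by positivity
  have hstep := rpow_mul_add_one_add_le (Nat.cast_pos.mpr hn : (0 : ℝ) < n) hs.le
  rw [GammaSeq, GammaSeq, Finset.prod_range_succ _ (n + 1), Nat.factorial_succ,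
    div_le_div_iff₀ hprod (by positivity)]
  push_cast
  linear_combination (n ! * ∏ j ∈ Finset.range (n + 1), (s + (j : ℝ))) * hstep

lemma pow_div_gammaSeq (α β r : ℝ) {n : ℕ} (hn : 1 ≤ n) (k : ℕ) :
    r ^ k / GammaSeq (β + k * α) n =
      ((n : ℝ) ^ β * n !)⁻¹ *
        ((affinePochhammer α β (n + 1)).eval (k : ℝ) * (r / (n : ℝ) ^ α) ^ k) := by
  have hn0 : (0 : ℝ) < n := by exact_mod_cast hn
  rw [GammaSeq, eval_affinePochhammer, rpow_add hn0, mul_comm (k : ℝ) α, rpow_mul_natCast hn0.le,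
    div_pow]
  field_simp

lemma summable_pow_div_gammaSeq (α β : ℝ) {r : ℝ} {n : ℕ} (hn : 1 ≤ n) (hr : |r| < (n : ℝ) ^ α) :
    Summable fun k : ℕ => r ^ k / GammaSeq (β + k * α) n := by
  have hn0 : (0 : ℝ) < (n : ℝ) ^ α := (abs_nonneg r).trans_lt hr
  have hgeom : ‖r / (n : ℝ) ^ α‖ < 1 := by
    rwa [norm_div, norm_eq_abs, norm_of_nonneg hn0.le, div_lt_one hn0]
  simp only [pow_div_gammaSeq α β r hn]
  exact (summable_eval_mul_geometric _ hgeom).mul_left _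

lemma eventually_lt_natCast_rpow {α : ℝ} (hα : 0 < α) (c : ℝ) :
    ∀ᶠ n : ℕ in atTop, c < (n : ℝ) ^ α :=
  ((tendsto_rpow_atTop hα).comp tendsto_natCast_atTop_atTop).eventually_gt_atTop c

lemma tendsto_tsum_pow_div_gammaSeq {α β : ℝ} (hα : 0 < α) (hβ : 0 < β) (r : ℝ) :
    Tendsto (fun n : ℕ => ∑' k : ℕ, r ^ k / GammaSeq (β + k * α) n) atTop
      (𝓝 (∑' k : ℕ, r ^ k / Gamma (β + k * α))) := by
  have harg (k : ℕ) : 0 < β + k * α := by positivity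
  obtain ⟨m, hrm, hm⟩ :=
    ((eventually_lt_natCast_rpow hα |r|).and (eventually_ge_atTop 1)).exists
  have hbound : Summable fun k : ℕ => |r| ^ k / GammaSeq (β + k * α) m :=
    summable_pow_div_gammaSeq α β hm (by rwa [abs_abs])
  refine tendsto_tsum_of_dominated_convergence hbound (fun k => ?_) ?_
  · exact tendsto_const_nhds.div (GammaSeq_tendsto_Gamma _) (Gamma_pos_of_pos (harg k)).ne'
  · filter_upwards [eventually_ge_atTop m] with n hmn k
    have hpos := gammaSeq_pos (harg k) hm
    have hle := monotone_gammaSeq (harg k) hmn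
    rw [norm_div, norm_pow, norm_eq_abs, norm_of_nonneg (hpos.le.trans hle)]
    gcongr

lemma sq_one_div_gammaSeq_le {α β r : ℝ} (hα : 0 ≤ α) (hα1 : α ≤ 1) (hβ : α ≤ β) {n : ℕ}
    (hn : 1 ≤ n) (hr : |r| < (n : ℝ) ^ α) :
    (1 / GammaSeq β n) ^ 2 ≤
      (∑' k : ℕ, r ^ k / GammaSeq (β + k * α) n) *
        ∑' k : ℕ, (-r) ^ k / GammaSeq (β + k * α) n := by
  set c := ((n : ℝ) ^ β * n !)⁻¹
  set p := affinePochhammer α β (n + 1)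
  have hn0 : (0 : ℝ) < (n : ℝ) ^ α := (abs_nonneg r).trans_lt hr
  have hx : |r / (n : ℝ) ^ α| < 1 := by rwa [abs_div, abs_of_pos hn0, div_lt_one hn0]
  have hseries (s : ℝ) :
      ∑' k : ℕ, s ^ k / GammaSeq (β + k * α) n = c * valueSeries p (s / (n : ℝ) ^ α) := by
    simp only [pow_div_gammaSeq α β s hn, tsum_mul_left, valueSeries, c, p]
  have hzero : 1 / GammaSeq β n = c * p.eval 0 := by
    simpa [c, p] using pow_div_gammaSeq α β r hn 0
  have hsq : p.eval 0 ^ 2 ≤ valueSeries p (r / (n : ℝ) ^ α) * valueSeries p (-(r / (n : ℝ) ^ α)) :=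
    sq_eval_zero_le_of_mem_risingCone (affinePochhammer_mem_risingCone hα hα1 hβ (n + 1)) hx
  rw [hzero, hseries, hseries, neg_div]
  linear_combination c ^ 2 * hsq

lemma sq_one_div_gamma_le {α β : ℝ} (hα : 0 < α) (hα1 : α ≤ 1) (hβ : α ≤ β) (r : ℝ) :
    (1 / Gamma β) ^ 2 ≤
      (∑' k : ℕ, r ^ k / Gamma (β + k * α)) * ∑' k : ℕ, (-r) ^ k / Gamma (β + k * α) := by
  have hβ0 : 0 < β := hα.trans_le hβ
  refine le_of_tendsto_of_tendsto
    ((tendsto_const_nhds.div (GammaSeq_tendsto_Gamma β) (Gamma_pos_of_pos hβ0).ne').pow 2)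
    ((tendsto_tsum_pow_div_gammaSeq hα hβ0 r).mul (tendsto_tsum_pow_div_gammaSeq hα hβ0 (-r))) ?_
  filter_upwards [eventually_lt_natCast_rpow hα |r|, eventually_ge_atTop 1] with n hr hn
  exact sq_one_div_gammaSeq_le hα.le hα1 hβ hn hr

theorem mittagLeffler_pos_general {α β : ℝ} (hα : 0 < α) (hα1 : α ≤ 1) (hβ : α ≤ β) (r : ℝ) :
    0 < ∑' k : ℕ, r ^ k / Gamma (β + k * α) := by
  have hβ0 : 0 < β := hα.trans_le hβ
  have hnonneg {s : ℝ} (hs : 0 ≤ s) : 0 ≤ ∑' k : ℕ, s ^ k / Gamma (β + k * α) :=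
    tsum_nonneg fun k => div_nonneg (pow_nonneg hs k) (Gamma_pos_of_pos (by positivity)).le
  have hprod := (pow_pos (one_div_pos.mpr (Gamma_pos_of_pos hβ0)) 2).trans_le
    (sq_one_div_gamma_le hα hα1 hβ r)
  rcases le_total 0 r with hr | hr
  · exact (hnonneg hr).lt_of_ne' (left_ne_zero_of_mul hprod.ne')
  · exact pos_of_mul_pos_left hprod (hnonneg (neg_nonneg.mpr hr))

theorem mittagLeffler_pos (α : ℝ) (hα : 0 < α) (hα1 : α ≤ 1) (r : ℝ) :
    0 < mittagLeffler α r ∧ 0 < mittagLefflerAA α r :=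
  ⟨mittagLeffler_pos_general hα hα1 hα1 r, mittagLeffler_pos_general hα hα1 le_rfl r⟩
end

section
/- Let 0 < α < 1. Then, as r → +∞, E_α(r) − (1/α)·exp(r^{1/α}) = O(1/r); that is, there exist constants C > 0 and R > 0 such that |E_α(r) − (1/α)·exp(r^{1/α})| ≤ C/r for all r ≥ R. -/
open Real

/-!
In the variable `w = log z`, Hankel's formula writes `2πi / Γ (1 + a)` as the integral of
`exp (exp w - a w)` along the boundary of a half-strip `L < Re w`, `|Im w| < π`. With
`r = exp (α c)` and `L > c`, summing the geometric series under the integral sign represents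
`2πi E_α(r)` by the kernel `exp (exp w) / (1 - exp (-α (w - c)))`, whose only pole in the strip
`|Im w| ≤ π` is a simple one at `c`, provided `α < 2`. The kernel of `E_1 = exp` has residue `α`
times as large at the same pole, so subtracting `1 / α` times it removes the pole at the cost of
`exp (exp c) / α = exp (r ^ (1 / α)) / α`, and the contour can be pushed to `Re w = -∞`. Only the
jump of the kernel between the lines `Im w = ±π` survives. It vanishes for `E_1` by periodicity,
and for `E_α` the factor `1 / (1 - exp (-α (w - c)))` makes it `O(exp (-α c)) = O(1 / r)`.
-/

open MeasureTheory Filter Topology Set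
open Complex (I)

section Contour

variable {E : Type*} [NormedAddCommGroup E] {L : ℝ}

/-- Integrability along the boundary of the half-strip `L < Re w`, `|Im w| < π`. Under `z = exp w`
this is a Hankel contour around the negative real axis. -/
structure HankelIntegrable (L : ℝ) (Φ : ℂ → E) : Prop where
  ray : ∀ θ : ℝ, |θ| = π → IntegrableOn (fun y : ℝ => Φ (y + θ * I)) (Ioi L)
  segment : IntervalIntegrable (fun θ : ℝ => Φ (L + θ * I)) volume (-π) π

/-- The difference of the values of `Φ` on the lines `Im w = π` and `Im w = -π`. -/
noncomputable def rayJump (Φ : ℂ → E) (y : ℝ) : E :=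
  Φ (y + π * I) - Φ (y + (-π : ℝ) * I)

lemma abs_pi : |π| = π :=
  abs_of_pos pi_pos

lemma abs_neg_pi : |-π| = π := by
  rw [abs_neg, abs_pi]

lemma norm_rayJump_le (Φ : ℂ → E) (y : ℝ) :
    ‖rayJump Φ y‖ ≤ ‖Φ (y + π * I)‖ + ‖Φ (y + (-π : ℝ) * I)‖ :=
  norm_sub_le _ _

lemma rayJump_congr {Φ Ψ : ℂ → E} (h : ∀ w : ℂ, w.im ≠ 0 → Φ w = Ψ w) :
    rayJump Φ = rayJump Ψ := by
  funext y
  rw [rayJump, rayJump, h _ (by simp [pi_ne_zero]), h _ (by simp [pi_ne_zero])]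

lemma continuous_horizontal_line {Φ : ℂ → E} (hΦ : ContinuousOn Φ {w | |w.im| ≤ π})
    {θ : ℝ} (hθ : |θ| ≤ π) : Continuous fun y : ℝ => Φ (y + θ * I) :=
  hΦ.comp_continuous (by fun_prop) fun y => by simpa using hθ

namespace HankelIntegrable

variable {Φ Ψ : ℂ → E}

lemma integrableOn_rayJump (hΦ : HankelIntegrable L Φ) : IntegrableOn (rayJump Φ) (Ioi L) :=
  (hΦ.ray π abs_pi).sub (hΦ.ray (-π) abs_neg_pi)

lemma sub (hΦ : HankelIntegrable L Φ) (hΨ : HankelIntegrable L Ψ) :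
    HankelIntegrable L fun w => Φ w - Ψ w where
  ray θ hθ := (hΦ.ray θ hθ).sub (hΨ.ray θ hθ)
  segment := hΦ.segment.sub hΨ.segment

lemma smul [NormedSpace ℂ E] (hΦ : HankelIntegrable L Φ) (c : ℂ) :
    HankelIntegrable L fun w => c • Φ w where
  ray θ hθ := (hΦ.ray θ hθ).smul c
  segment := hΦ.segment.smul c

lemma norm (hΦ : HankelIntegrable L Φ) : HankelIntegrable L fun w => ‖Φ w‖ where
  ray θ hθ := (hΦ.ray θ hθ).norm
  segment := hΦ.segment.norm

lemma mono' {g : ℂ → ℝ} (hg : HankelIntegrable L g) (hΦ : ContinuousOn Φ {w | L ≤ w.re})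
    (hle : ∀ w : ℂ, L ≤ w.re → ‖Φ w‖ ≤ g w) : HankelIntegrable L Φ where
  ray θ hθ := by
    have hmem : ∀ y ∈ Ioi L, L ≤ ((y : ℂ) + θ * I).re := fun y hy => by simpa using le_of_lt hy
    have hc : ContinuousOn (fun y : ℝ => Φ (y + θ * I)) (Ioi L) := hΦ.comp (by fun_prop) hmem
    exact (hg.ray θ hθ).mono' (hc.aestronglyMeasurable measurableSet_Ioi)
      (ae_restrict_of_forall_mem measurableSet_Ioi fun y hy => hle _ (hmem y hy))
  segment := (hΦ.comp_continuous (by fun_prop) fun θ => by simp).intervalIntegrable _ _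

end HankelIntegrable

variable [NormedSpace ℂ E] {Φ Ψ : ℂ → E}

/-- The integral along the boundary of the half-strip `L < Re w`, `|Im w| < π`, oriented so that the
strip lies on its right. -/
noncomputable def hankelIntegral (L : ℝ) (Φ : ℂ → E) : E :=
  (∫ y in Ioi L, rayJump Φ y) + I • ∫ θ in (-π)..π, Φ (L + θ * I)

lemma hankelIntegral_smul (L : ℝ) (c : ℂ) (Φ : ℂ → E) :
    hankelIntegral L (fun w => c • Φ w) = c • hankelIntegral L Φ := by
  simp only [hankelIntegral, rayJump, ← smul_sub, integral_smul, intervalIntegral.integral_smul,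
    smul_add, smul_comm c I]

lemma hankelIntegral_sub (hΦ : HankelIntegrable L Φ) (hΨ : HankelIntegrable L Ψ) :
    hankelIntegral L (fun w => Φ w - Ψ w) = hankelIntegral L Φ - hankelIntegral L Ψ := by
  have hjump : rayJump (fun w => Φ w - Ψ w) = fun y => rayJump Φ y - rayJump Ψ y :=
    funext fun y => sub_sub_sub_comm _ _ _ _
  rw [hankelIntegral, hjump, integral_sub hΦ.integrableOn_rayJump hΨ.integrableOn_rayJump,
    intervalIntegral.integral_sub hΦ.segment hΨ.segment, smul_sub, hankelIntegral, hankelIntegral]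
  abel

lemma hankelIntegral_congr (h : ∀ w : ℂ, L ≤ w.re → Φ w = Ψ w) :
    hankelIntegral L Φ = hankelIntegral L Ψ := by
  have hray : EqOn (rayJump Φ) (rayJump Ψ) (Ioi L) := fun y hy => by
    rw [rayJump, rayJump, h _ (by simpa using le_of_lt hy), h _ (by simpa using le_of_lt hy)]
  have hsegment : ∀ θ : ℝ, Φ (L + θ * I) = Ψ (L + θ * I) := fun θ => h _ (by simp)
  simp only [hankelIntegral, hsegment, setIntegral_congr_fun measurableSet_Ioi hray]

lemma hasSum_hankelIntegral {ι : Type*} [Countable ι] {F : ι → ℂ → E} {u : ι → ℝ} {g : ℂ → ℝ}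
    (hF : ∀ k, HankelIntegrable L (F k)) (hu : Summable u) (hg : HankelIntegrable L g)
    (hle : ∀ k (w : ℂ), L ≤ w.re → ‖F k w‖ ≤ u k * g w)
    (hsum : ∀ w : ℂ, L ≤ w.re → HasSum (fun k => F k w) (Φ w)) :
    HasSum (fun k => hankelIntegral L (F k)) (hankelIntegral L Φ) := by
  have hre : ∀ y ∈ Ioi L, ∀ θ : ℝ, L ≤ ((y : ℂ) + θ * I).re := fun y hy θ => by
    simpa using le_of_lt hy
  have hray : HasSum (fun k => ∫ y in Ioi L, rayJump (F k) y) (∫ y in Ioi L, rayJump Φ y) := by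
    refine hasSum_integral_of_dominated_convergence
      (fun k y => u k * (g (y + π * I) + g (y + (-π : ℝ) * I)))
      (fun k => (hF k).integrableOn_rayJump.aestronglyMeasurable)
      (fun k => ae_restrict_of_forall_mem measurableSet_Ioi fun y hy => ?_)
      (Eventually.of_forall fun y => hu.mul_right _) ?_
      (ae_restrict_of_forall_mem measurableSet_Ioi fun y hy =>
        (hsum _ (hre y hy π)).sub (hsum _ (hre y hy (-π))))
    · rw [mul_add]
      exact (norm_rayJump_le _ _).trans
        (add_le_add (hle k _ (hre y hy π)) (hle k _ (hre y hy (-π))))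
    · simp only [tsum_mul_right]
      exact ((hg.ray π abs_pi).add (hg.ray (-π) abs_neg_pi)).const_mul _
  have hsegment : HasSum (fun k => ∫ θ in (-π)..π, F k (L + θ * I))
      (∫ θ in (-π)..π, Φ (L + θ * I)) := by
    refine intervalIntegral.hasSum_integral_of_dominated_convergence
      (fun k θ => u k * g (L + θ * I)) (fun k => (hF k).segment.def'.aestronglyMeasurable)
      (fun k => Eventually.of_forall fun θ _ => hle k _ (by simp))
      (Eventually.of_forall fun θ _ => hu.mul_right _) ?_
      (Eventually.of_forall fun θ _ => hsum _ (by simp))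
    simp only [tsum_mul_right]
    exact hg.segment.const_mul _
  exact hray.add (hsegment.const_smul I)

lemma hankelIntegral_eq_zero_of_hasDerivAt [CompleteSpace E] {Φ' : ℂ → E}
    (hderiv : ∀ w : ℂ, L ≤ w.re → HasDerivAt Φ (Φ' w) w) (hint : HankelIntegrable L Φ')
    (hlim : ∀ θ : ℝ, |θ| = π → Tendsto (fun y : ℝ => Φ (y + θ * I)) atTop (𝓝 0)) :
    hankelIntegral L Φ' = 0 := by
  have hray : ∀ θ : ℝ, |θ| = π → ∫ y in Ioi L, Φ' (y + θ * I) = 0 - Φ (L + θ * I) := by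
    intro θ hθ
    refine integral_Ioi_of_hasDerivAt_of_tendsto' (fun y hy => ?_) (hint.ray θ hθ) (hlim θ hθ)
    have hline : HasDerivAt (fun y : ℝ => (y : ℂ) + θ * I) 1 y :=
      Complex.ofRealCLM.hasDerivAt.add_const _
    exact ((hderiv _ (by simpa using hy)).scomp y hline).congr_deriv (one_smul _ _)
  have hsegment : I • ∫ θ in (-π)..π, Φ' (L + θ * I) = Φ (L + π * I) - Φ (L + (-π : ℝ) * I) := by
    rw [← intervalIntegral.integral_smul]
    refine intervalIntegral.integral_eq_sub_of_hasDerivAt (f := fun θ : ℝ => Φ (L + θ * I))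
      (fun θ _ => ?_) (hint.segment.smul I)
    have hline : HasDerivAt (fun θ : ℝ => (L : ℂ) + θ * I) I θ := by
      simpa using (Complex.ofRealCLM.hasDerivAt.mul_const I).const_add (L : ℂ)
    exact (hderiv _ (by simp)).scomp θ hline
  simp only [hankelIntegral, rayJump]
  rw [integral_sub (hint.ray π abs_pi) (hint.ray (-π) abs_neg_pi), hray π abs_pi,
    hray (-π) abs_neg_pi, hsegment]
  abel

lemma segmentIntegral_eq_intervalIntegral_rayJump_add (hd : DifferentiableOn ℂ Φ {w | |w.im| ≤ π})
    (x L : ℝ) :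
    I • ∫ θ in (-π)..π, Φ (L + θ * I) =
      (∫ y in x..L, rayJump Φ y) + I • ∫ θ in (-π)..π, Φ (x + θ * I) := by
  have hcauchy := Complex.integral_boundary_rect_eq_zero_of_differentiableOn Φ ⟨x, -π⟩ ⟨L, π⟩
    (hd.mono fun w hw => by
      have him := (Complex.mem_reProdIm.1 hw).2
      rw [uIcc_of_le (by linarith [pi_pos])] at him
      exact abs_le.2 him)
  have hline : ∀ θ : ℝ, |θ| = π → IntervalIntegrable (fun y : ℝ => Φ (y + θ * I)) volume x L :=
    fun θ hθ => (continuous_horizontal_line hd.continuousOn hθ.le).intervalIntegrable _ _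
  simp only [rayJump]
  rw [intervalIntegral.integral_sub (hline π abs_pi) (hline (-π) abs_neg_pi), ← sub_eq_zero,
    ← hcauchy]
  abel

/-- The segment is pushed to `Re w = -∞`, where its contribution vanishes. -/
lemma hankelIntegral_eq_integral_rayJump {b : ℝ → ℝ}
    (hd : DifferentiableOn ℂ Φ {w | |w.im| ≤ π}) (hint : Integrable (rayJump Φ))
    (hb : Tendsto b atBot (𝓝 0))
    (hle : ∀ᶠ x : ℝ in atBot, ∀ θ : ℝ, |θ| ≤ π → ‖Φ (x + θ * I)‖ ≤ b x) :
    hankelIntegral L Φ = ∫ y, rayJump Φ y := by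
  have hsegment : Tendsto (fun x : ℝ => ∫ θ in (-π)..π, Φ (x + θ * I)) atBot (𝓝 0) := by
    refine squeeze_zero_norm' (a := fun x => b x * |π - -π|) ?_ (by simpa using hb.mul_const _)
    filter_upwards [hle] with x hx
    refine intervalIntegral.norm_integral_le_of_norm_le_const fun θ hθ => hx θ ?_
    rw [uIoc_of_le (by linarith [pi_pos])] at hθ
    exact abs_le.2 ⟨hθ.1.le, hθ.2⟩
  have hlim := (intervalIntegral_tendsto_integral_Iic L hint.integrableOn tendsto_id).add
    (hsegment.const_smul I)
  have hIic : I • ∫ θ in (-π)..π, Φ (L + θ * I) = ∫ y in Iic L, rayJump Φ y := by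
    simpa using tendsto_nhds_unique (tendsto_const_nhds.congr
      fun x => segmentIntegral_eq_intervalIntegral_rayJump_add hd x L) hlim
  rw [hankelIntegral, hIic, add_comm,
    intervalIntegral.integral_Iic_add_Ioi hint.integrableOn hint.integrableOn]

end Contour

section Gamma

lemma exp_smul_Gamma_integrand_exp (s : ℂ) (y : ℝ) :
    Real.exp y • ((Real.exp (-Real.exp y) : ℂ) * (Real.exp y : ℂ) ^ (s - 1)) =
      Complex.exp (-Real.exp y + s * y) := by
  have hlog : Complex.log (Real.exp y) = y := by rw [← Complex.ofReal_log (by positivity), log_exp]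
  rw [Complex.cpow_def_of_ne_zero (by exact_mod_cast (Real.exp_pos y).ne'), hlog, Complex.real_smul,
    Complex.ofReal_exp, Complex.ofReal_exp, ← Complex.exp_add, ← Complex.exp_add]
  push_cast
  ring_nf

lemma integrable_cexp_neg_exp_add_mul {s : ℂ} (hs : 0 < s.re) :
    Integrable fun y : ℝ => Complex.exp (-Real.exp y + s * y) := by
  have h := (integrableOn_image_iff_integrableOn_abs_deriv_smul MeasurableSet.univ
    (fun y _ => (Real.hasDerivAt_exp y).hasDerivWithinAt) Real.exp_injective.injOn _).1
    (by rw [image_univ, Real.range_exp]; exact Complex.GammaIntegral_convergent hs)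
  simpa only [integrableOn_univ, Real.abs_exp, exp_smul_Gamma_integrand_exp] using h

lemma integral_cexp_neg_exp_add_mul {s : ℂ} (hs : 0 < s.re) :
    ∫ y : ℝ, Complex.exp (-Real.exp y + s * y) = Complex.Gamma s := by
  have h := integral_image_eq_integral_abs_deriv_smul MeasurableSet.univ
    (fun y _ => (Real.hasDerivAt_exp y).hasDerivWithinAt) Real.exp_injective.injOn
    fun x : ℝ => (Real.exp (-x) : ℂ) * (x : ℂ) ^ (s - 1)
  simp only [image_univ, Real.range_exp, setIntegral_univ, Real.abs_exp,
    exp_smul_Gamma_integrand_exp] at h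
  rw [← h, Complex.Gamma_eq_integral hs, Complex.GammaIntegral]

lemma integrable_exp_neg_exp_add_mul {s : ℝ} (hs : 0 < s) :
    Integrable fun y : ℝ => Real.exp (-Real.exp y + s * y) := by
  simpa [Complex.norm_exp, -Complex.ofReal_exp] using
    (integrable_cexp_neg_exp_add_mul (s := s) (by simpa)).norm

lemma integral_exp_neg_exp_add_mul {s : ℝ} (hs : 0 < s) :
    ∫ y : ℝ, Real.exp (-Real.exp y + s * y) = Real.Gamma s := by
  have h := integral_cexp_neg_exp_add_mul (s := s) (by simpa)
  rw [Complex.Gamma_ofReal] at h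
  exact_mod_cast h

lemma tendsto_exp_neg_exp_sub_mul_atTop (a : ℝ) :
    Tendsto (fun y : ℝ => Real.exp (-Real.exp y - a * y)) atTop (𝓝 0) := by
  refine ((tendsto_rpow_mul_exp_neg_mul_atTop_nhds_zero (-a) 1 one_pos).comp
    Real.tendsto_exp_atTop).congr fun y => ?_
  rw [Function.comp_apply, ← Real.exp_mul, ← Real.exp_add]
  ring_nf

lemma integrableOn_exp_neg_exp_sub_mul_Ioi (a L : ℝ) :
    IntegrableOn (fun y : ℝ => Real.exp (-Real.exp y - a * y)) (Ioi L) := by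
  refine integrable_of_isBigO_exp_neg one_pos (by fun_prop) (Asymptotics.IsLittleO.isBigO
    ((Asymptotics.isLittleO_iff_tendsto fun y h => absurd h (Real.exp_pos _).ne').2
      ((tendsto_exp_neg_exp_sub_mul_atTop (a - 1)).congr fun y => ?_)))
  rw [← Real.exp_sub]
  ring_nf

end Gamma

section HankelFormula

/-- The integrand of Hankel's formula for `1 / Γ (1 + a)`, in the variable `w = log z`. -/
noncomputable def hankelKernel (a w : ℂ) : ℂ :=
  Complex.exp (Complex.exp w - a * w)

lemma differentiable_hankelKernel (a : ℂ) : Differentiable ℂ (hankelKernel a) := by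
  unfold hankelKernel
  fun_prop

lemma hasDerivAt_hankelKernel (a w : ℂ) :
    HasDerivAt (hankelKernel a) (hankelKernel (a - 1) w - a * hankelKernel a w) w := by
  refine (((Complex.hasDerivAt_exp w).sub ((hasDerivAt_id w).const_mul a)).cexp).congr_deriv ?_
  have hsub : hankelKernel (a - 1) w = Complex.exp w * hankelKernel a w := by
    rw [hankelKernel, hankelKernel, ← Complex.exp_add]
    ring_nf
  rw [hsub, hankelKernel]
  simp only [Pi.sub_apply, id]
  ring

lemma norm_hankelKernel (a : ℂ) (y θ : ℝ) :
    ‖hankelKernel a (y + θ * I)‖ = Real.exp (Real.exp y * Real.cos θ - a.re * y + a.im * θ) := by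
  have hre : ((y : ℂ) + θ * I).re = y := by simp
  have him : ((y : ℂ) + θ * I).im = θ := by simp
  rw [hankelKernel, Complex.norm_exp, Complex.sub_re, Complex.exp_re, Complex.mul_re, hre, him]
  ring_nf

lemma norm_hankelKernel_of_abs_eq_pi (a : ℂ) (y : ℝ) {θ : ℝ} (hθ : |θ| = π) :
    ‖hankelKernel a (y + θ * I)‖ = Real.exp (a.im * θ) * Real.exp (-Real.exp y - a.re * y) := by
  rw [norm_hankelKernel, ← Real.cos_abs, hθ, Real.cos_pi, ← Real.exp_add]
  ring_nf

lemma norm_hankelKernel_le (a : ℂ) (x : ℝ) {θ : ℝ} (hθ : |θ| ≤ π) :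
    ‖hankelKernel a (x + θ * I)‖ ≤
      Real.exp (|a.im| * π) * (Real.exp (Real.exp x) * Real.exp (-a.re * x)) := by
  rw [norm_hankelKernel, ← Real.exp_add, ← Real.exp_add, Real.exp_le_exp]
  have him : a.im * θ ≤ |a.im| * π := (le_abs_self _).trans (by rw [abs_mul]; gcongr)
  have hcos : Real.exp x * Real.cos θ ≤ Real.exp x :=
    mul_le_of_le_one_right (Real.exp_pos x).le (Real.cos_le_one θ)
  linarith

lemma hankelIntegrable_hankelKernel (L : ℝ) (a : ℂ) : HankelIntegrable L (hankelKernel a) where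
  ray θ hθ := by
    refine ((integrableOn_exp_neg_exp_sub_mul_Ioi a.re L).const_mul (Real.exp (a.im * θ))).mono'
      ((differentiable_hankelKernel a).continuous.comp (by fun_prop)).aestronglyMeasurable
      (Eventually.of_forall fun y => (norm_hankelKernel_of_abs_eq_pi a y hθ).le)
  segment :=
    ((differentiable_hankelKernel a).continuous.comp (by fun_prop)).intervalIntegrable _ _

lemma tendsto_hankelKernel_ray (a : ℂ) {θ : ℝ} (hθ : |θ| = π) :
    Tendsto (fun y : ℝ => hankelKernel a (y + θ * I)) atTop (𝓝 0) := by
  rw [tendsto_zero_iff_norm_tendsto_zero]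
  simp only [norm_hankelKernel_of_abs_eq_pi a _ hθ]
  simpa using (tendsto_exp_neg_exp_sub_mul_atTop a.re).const_mul (Real.exp (a.im * θ))

lemma rayJump_hankelKernel (a : ℂ) (y : ℝ) :
    rayJump (hankelKernel a) y =
      Complex.exp (-Real.exp y + -a * y) * (-2 * I * Complex.sin (π * a)) := by
  have hexp : ∀ θ : ℝ, Complex.exp (θ * I) = -1 → hankelKernel a (y + θ * I) =
      Complex.exp (-Real.exp y + -a * y) * Complex.exp (-(θ * a) * I) := by
    intro θ hθ
    rw [hankelKernel, Complex.exp_add, hθ, ← Complex.exp_add]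
    push_cast
    ring_nf
  have hneg : -(((-π : ℝ) : ℂ) * a) * I = π * a * I := by
    push_cast
    ring
  rw [rayJump, hexp π Complex.exp_pi_mul_I, hexp (-π) (by simp [Complex.exp_neg]), hneg,
    Complex.sin]
  linear_combination Complex.exp (-Real.exp y + -a * y) *
    (Complex.exp (-(π * a) * I) - Complex.exp (π * a * I)) * Complex.I_mul_I

lemma hankelIntegral_hankelKernel_sub_one (L : ℝ) (a : ℂ) :
    hankelIntegral L (hankelKernel (a - 1)) = a * hankelIntegral L (hankelKernel a) := by
  have hsub := hankelIntegrable_hankelKernel L (a - 1)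
  have hsmul := (hankelIntegrable_hankelKernel L a).smul a
  rw [← sub_eq_zero, ← smul_eq_mul a, ← hankelIntegral_smul, ← hankelIntegral_sub hsub hsmul]
  exact hankelIntegral_eq_zero_of_hasDerivAt (fun w _ => hasDerivAt_hankelKernel a w)
    (hsub.sub hsmul) fun θ hθ => tendsto_hankelKernel_ray a hθ

lemma inv_Gamma_one_add {a : ℂ} (ha : Complex.Gamma (-a) ≠ 0) :
    (Complex.Gamma (1 + a))⁻¹ = -(Complex.Gamma (-a) * Complex.sin (π * a) / π) := by
  have hrefl := congrArg (·⁻¹) (Complex.Gamma_mul_Gamma_one_sub (-a))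
  simp only [sub_neg_eq_add, mul_neg, Complex.sin_neg, mul_inv, inv_div] at hrefl
  rw [(inv_mul_eq_iff_eq_mul₀ ha).1 hrefl]
  ring

lemma tendsto_exp_exp_atBot : Tendsto (fun x : ℝ => Real.exp (Real.exp x)) atBot (𝓝 1) := by
  simpa [Function.comp_def] using (Real.continuous_exp.tendsto 0).comp Real.tendsto_exp_atBot

lemma hankelIntegral_hankelKernel_of_re_neg (L : ℝ) {a : ℂ} (ha : a.re < 0) :
    hankelIntegral L (hankelKernel a) = 2 * π * I * (Complex.Gamma (1 + a))⁻¹ := by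
  have hneg : 0 < (-a).re := by simpa
  have hb : Tendsto (fun x : ℝ => Real.exp (|a.im| * π) *
      (Real.exp (Real.exp x) * Real.exp (-a.re * x))) atBot (𝓝 0) := by
    have hexp := Real.tendsto_exp_atBot.comp (tendsto_id.const_mul_atBot (neg_pos.2 ha))
    simpa using (tendsto_exp_exp_atBot.mul hexp).const_mul (Real.exp (|a.im| * π))
  have hjump := funext (rayJump_hankelKernel a)
  rw [hankelIntegral_eq_integral_rayJump (differentiable_hankelKernel a).differentiableOn
    (by rw [hjump]; exact (integrable_cexp_neg_exp_add_mul hneg).mul_const _) hb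
    (Eventually.of_forall fun x θ hθ => norm_hankelKernel_le a x hθ), hjump, integral_mul_const,
    integral_cexp_neg_exp_add_mul hneg]
  rw [inv_Gamma_one_add (Complex.Gamma_ne_zero_of_re_pos hneg)]
  have hπ : (π : ℂ) ≠ 0 := by exact_mod_cast pi_ne_zero
  field_simp

lemma integral_comp_exp_add_mul_I {E : Type*} [NormedAddCommGroup E] [NormedSpace ℂ E]
    [CompleteSpace E] {f : ℂ → E} (hf : Differentiable ℂ f) (L : ℝ) :
    ∫ θ in (-π)..π, f (Complex.exp (L + θ * I)) = (2 * π) • f 0 := by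
  have hmean : circleAverage f 0 (Real.exp L) = f 0 := hf.diffContOnCl.circleAverage
  rw [circleAverage_eq_integral_add (-π), inv_smul_eq_iff₀ (by positivity),
    intervalIntegral.integral_comp_add_right (fun θ => f (circleMap 0 (Real.exp L) θ))] at hmean
  rw [← hmean, zero_add, two_mul, add_neg_cancel_right]
  simp [circleMap, Complex.exp_add]

theorem hankelIntegral_hankelKernel (L : ℝ) (a : ℂ) :
    hankelIntegral L (hankelKernel a) = 2 * π * I * (Complex.Gamma (1 + a))⁻¹ := by
  obtain ⟨n, hn⟩ := exists_nat_gt a.re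
  induction n generalizing a with
  | zero => exact hankelIntegral_hankelKernel_of_re_neg L (by simpa using hn)
  | succ n ih =>
    rcases eq_or_ne a 0 with rfl | ha
    · have hjump : rayJump (hankelKernel 0) = 0 := by
        funext y
        simp [rayJump_hankelKernel]
      have hcircle := integral_comp_exp_add_mul_I Complex.differentiable_exp L
      simp only [hankelIntegral, hjump, hankelKernel, zero_mul, sub_zero, hcircle]
      simp [mul_comm I]
    · have hrec := ih (a - 1) (by push_cast at hn; simpa using by linarith)
      rw [hankelIntegral_hankelKernel_sub_one, add_sub_cancel,
        Complex.one_div_Gamma_eq_self_mul_one_div_Gamma_add_one, add_comm a] at hrec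
      exact mul_left_cancel₀ ha (hrec.trans (by ring))

end HankelFormula

section Todd

/-- The Todd function `z / (1 - exp (-z))`, with its removable singularity at `0` filled in. -/
noncomputable def toddFun (z : ℂ) : ℂ :=
  (dslope (fun z => 1 - Complex.exp (-z)) 0 z)⁻¹

lemma toddFun_of_ne_zero {z : ℂ} (hz : z ≠ 0) : toddFun z = z / (1 - Complex.exp (-z)) := by
  rw [toddFun, dslope_of_ne _ hz, slope_def_field]
  simp

lemma one_sub_exp_neg_ne_zero {z : ℂ} (hz : z ≠ 0) (him : |z.im| < 2 * π) :
    1 - Complex.exp (-z) ≠ 0 := by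
  intro h
  obtain ⟨n, hn⟩ := Complex.exp_eq_one_iff.1 (sub_eq_zero.1 h).symm
  have hnim : -z.im = n * (2 * π) := by simpa using congrArg Complex.im hn
  have hn1 : |(n : ℝ)| < 1 := by
    rw [← abs_neg, hnim, abs_mul, abs_of_pos two_pi_pos] at him
    exact (mul_lt_iff_lt_one_left two_pi_pos).1 him
  have hn0 : n = 0 := Int.abs_lt_one_iff.1 (by exact_mod_cast hn1)
  exact hz (by simpa [hn0] using hn)

lemma differentiableAt_toddFun {z : ℂ} (him : |z.im| < 2 * π) : DifferentiableAt ℂ toddFun z := by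
  have hd : Differentiable ℂ (dslope (fun z => 1 - Complex.exp (-z)) 0) := by
    rw [← differentiableOn_univ, Complex.differentiableOn_dslope univ_mem]
    fun_prop
  refine (hd z).inv ?_
  rcases eq_or_ne z 0 with rfl | hz
  · have hderiv : HasDerivAt (fun z : ℂ => 1 - Complex.exp (-z)) 1 0 := by
      simpa using ((hasDerivAt_id (0 : ℂ)).neg.cexp).const_sub 1
    rw [dslope_same, hderiv.deriv]
    exact one_ne_zero
  · rw [dslope_of_ne _ hz, slope_def_field]
    simpa [hz] using one_sub_exp_neg_ne_zero hz him

/-- Both terms have a simple pole at `0` with residue `α⁻¹`. -/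
lemma exists_differentiableOn_eq_inv_one_sub_exp_sub {α : ℝ} (hα0 : α ≠ 0) (hα2 : |α| < 2) :
    ∃ g : ℂ → ℂ, DifferentiableOn ℂ g {z | |z.im| ≤ π} ∧ ∀ z : ℂ, z ≠ 0 →
      g z = (1 - Complex.exp (-(α * z)))⁻¹ - (α : ℂ)⁻¹ * (1 - Complex.exp (-z))⁻¹ := by
  have hα : (α : ℂ) ≠ 0 := by exact_mod_cast hα0
  have hnhds : {z : ℂ | |z.im| ≤ π} ∈ 𝓝 0 := by
    have hopen : IsOpen {z : ℂ | |z.im| < π} := isOpen_lt (by fun_prop) continuous_const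
    exact mem_of_superset (hopen.mem_nhds (by simpa using pi_pos)) fun z (hz : |z.im| < π) => hz.le
  have hd : DifferentiableOn ℂ (fun z => toddFun (α * z) - toddFun z) {z | |z.im| ≤ π} := by
    intro z (hz : |z.im| ≤ π)
    have him : |((α : ℂ) * z).im| < 2 * π := by
      rw [Complex.im_ofReal_mul, abs_mul]
      exact mul_lt_mul_of_lt_of_le_of_nonneg_of_pos hα2 hz (abs_nonneg _) pi_pos
    have hcomp : DifferentiableAt ℂ (fun z => toddFun (α * z)) z :=
      (differentiableAt_toddFun him).comp z (by fun_prop)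
    exact (hcomp.sub (differentiableAt_toddFun (by linarith [pi_pos]))).differentiableWithinAt
  refine ⟨fun z => (α : ℂ)⁻¹ * dslope (fun z => toddFun (α * z) - toddFun z) 0 z,
    ((Complex.differentiableOn_dslope hnhds).2 hd).const_mul _, fun z hz => ?_⟩
  simp only [dslope_of_ne _ hz, slope_def_field, toddFun_of_ne_zero hz,
    toddFun_of_ne_zero (mul_ne_zero hα hz), mul_zero, sub_self, sub_zero]
  field_simp

end Todd

section MittagLeffler

variable {α c : ℝ}

/-- The generating function `∑ₖ exp (α c) ^ k * hankelKernel (k * α)` of the Hankel integrands of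
the coefficients of `mittagLeffler α`, evaluated at `r = exp (α * c)`. -/
noncomputable def mittagLefflerKernel (α c : ℝ) (w : ℂ) : ℂ :=
  Complex.exp (Complex.exp w) * (1 - Complex.exp (-(α * (w - c))))⁻¹

lemma mittagLeffler_one (r : ℝ) : mittagLeffler 1 r = Real.exp r := by
  rw [Real.exp_eq_exp_ℝ, NormedSpace.exp_eq_tsum_div, mittagLeffler]
  refine tsum_congr fun k => ?_
  rw [mul_one, add_comm, Real.Gamma_nat_eq_factorial]

lemma norm_exp_neg_mul_sub (α c : ℝ) (w : ℂ) :
    ‖Complex.exp (-(α * (w - c)))‖ = Real.exp (-(α * (w.re - c))) := by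
  simp [Complex.norm_exp]

lemma exp_neg_mul_sub_lt_one (hα : 0 < α) {x : ℝ} (hx : c < x) :
    Real.exp (-(α * (x - c))) < 1 :=
  Real.exp_lt_one_iff.2 (neg_neg_of_pos (mul_pos hα (sub_pos.2 hx)))

lemma exp_pow_mul_hankelKernel (α c : ℝ) (k : ℕ) (w : ℂ) :
    ((Real.exp (α * c) ^ k : ℝ) : ℂ) * hankelKernel (k * α) w =
      Complex.exp (Complex.exp w) * Complex.exp (-(α * (w - c))) ^ k := by
  rw [hankelKernel, ← Real.exp_nat_mul, ← Complex.exp_nat_mul, ← Complex.exp_add,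
    Complex.ofReal_exp, ← Complex.exp_add]
  push_cast
  ring_nf

lemma hasSum_mittagLefflerKernel (hα : 0 < α) {w : ℂ} (hw : c < w.re) :
    HasSum (fun k : ℕ => ((Real.exp (α * c) ^ k : ℝ) : ℂ) * hankelKernel (k * α) w)
      (mittagLefflerKernel α c w) := by
  have hnorm : ‖Complex.exp (-(α * (w - c)))‖ < 1 := by
    rw [norm_exp_neg_mul_sub]
    exact exp_neg_mul_sub_lt_one hα hw
  simpa only [exp_pow_mul_hankelKernel, mittagLefflerKernel] using
    (hasSum_geometric_of_norm_lt_one hnorm).mul_left (Complex.exp (Complex.exp w))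

lemma norm_mittagLefflerKernel_le_of_le {w : ℂ} {d : ℝ} (hd : 0 < d)
    (hw : d ≤ ‖1 - Complex.exp (-(α * (w - c)))‖) :
    ‖mittagLefflerKernel α c w‖ ≤ ‖Complex.exp (Complex.exp w)‖ * d⁻¹ := by
  rw [mittagLefflerKernel, norm_mul, norm_inv]
  gcongr

lemma hankelIntegrable_mittagLefflerKernel (hα : 0 < α) {L : ℝ} (hL : c < L) :
    HankelIntegrable L (mittagLefflerKernel α c) := by
  have hρ := sub_pos.2 (exp_neg_mul_sub_lt_one hα hL)
  have hden : ∀ w : ℂ, L ≤ w.re →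
      1 - Real.exp (-(α * (L - c))) ≤ ‖1 - Complex.exp (-(α * (w - c)))‖ := by
    intro w hw
    have htri := norm_sub_norm_le 1 (Complex.exp (-(α * (w - c))))
    rw [norm_one, norm_exp_neg_mul_sub] at htri
    refine le_trans ?_ htri
    gcongr
  refine (((hankelIntegrable_hankelKernel L 0).smul
    ((1 - Real.exp (-(α * (L - c))))⁻¹ : ℝ)).norm).mono' ?_ fun w hw => ?_
  · unfold mittagLefflerKernel
    exact ContinuousOn.mul (by fun_prop) (ContinuousOn.inv₀ (by fun_prop)
      fun w hw => norm_pos_iff.1 (hρ.trans_le (hden w hw)))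
  · refine (norm_mittagLefflerKernel_le_of_le hρ (hden w hw)).trans_eq ?_
    rw [norm_smul, Complex.norm_of_nonneg (inv_nonneg.2 hρ.le), hankelKernel, zero_mul, sub_zero,
      mul_comm]

/-- Hankel's formula applied to each term of the series. -/
lemma hankelIntegral_mittagLefflerKernel (hα : 0 < α) {L : ℝ} (hL : c < L) :
    hankelIntegral L (mittagLefflerKernel α c) =
      2 * π * I * (mittagLeffler α (Real.exp (α * c)) : ℝ) := by
  have hsum := hasSum_hankelIntegral (L := L) (Φ := mittagLefflerKernel α c)
    (F := fun (k : ℕ) w => ((Real.exp (α * c) ^ k : ℝ) : ℂ) • hankelKernel (k * α) w)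
    (fun k => (hankelIntegrable_hankelKernel L (k * α)).smul _)
    (summable_geometric_of_lt_one (Real.exp_pos _).le (exp_neg_mul_sub_lt_one hα hL))
    (hankelIntegrable_hankelKernel L 0).norm (fun k w hw => ?_)
    fun w hw => hasSum_mittagLefflerKernel hα (hL.trans_le hw)
  · rw [← hsum.tsum_eq, mittagLeffler, Complex.ofReal_tsum, ← tsum_mul_left]
    refine tsum_congr fun k => ?_
    rw [hankelIntegral_smul, hankelIntegral_hankelKernel, smul_eq_mul, Complex.ofReal_div,
      ← Complex.Gamma_ofReal]
    push_cast
    ring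
  · rw [smul_eq_mul, exp_pow_mul_hankelKernel, norm_mul, norm_pow, norm_exp_neg_mul_sub, mul_comm,
      hankelKernel, zero_mul, sub_zero]
    gcongr

lemma norm_exp_exp_le (w : ℂ) : ‖Complex.exp (Complex.exp w)‖ ≤ Real.exp (Real.exp w.re) := by
  rw [Complex.norm_exp, ← Complex.norm_exp w]
  gcongr
  exact Complex.re_le_norm _

lemma norm_mittagLefflerKernel_le_of_re_lt (hα : 0 < α) {w : ℂ} (hw : w.re < c) :
    ‖mittagLefflerKernel α c w‖ ≤
      Real.exp (Real.exp w.re) * (Real.exp (-(α * (w.re - c))) - 1)⁻¹ := by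
  have hpos : 0 < Real.exp (-(α * (w.re - c))) - 1 := by
    rw [sub_pos, Real.one_lt_exp_iff]
    nlinarith
  have hden := norm_sub_norm_le (Complex.exp (-(α * (w - c)))) 1
  rw [norm_sub_rev, norm_exp_neg_mul_sub, norm_one] at hden
  refine (norm_mittagLefflerKernel_le_of_le hpos hden).trans ?_
  gcongr
  exact norm_exp_exp_le w

lemma tendsto_mittagLefflerKernel_bound_atBot (hα : 0 < α) (c : ℝ) :
    Tendsto (fun x : ℝ => Real.exp (Real.exp x) * (Real.exp (-(α * (x - c))) - 1)⁻¹)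
      atBot (𝓝 0) := by
  have hlin : Tendsto (fun x : ℝ => -(α * (x - c))) atBot atTop :=
    tendsto_neg_atBot_atTop.comp
      ((tendsto_atBot_add_const_right _ (-c) tendsto_id).const_mul_atBot hα)
  have hinv := tendsto_inv_atTop_zero.comp
    (tendsto_atTop_add_const_right _ (-1) (Real.tendsto_exp_atTop.comp hlin))
  simpa [sub_eq_add_neg] using tendsto_exp_exp_atBot.mul hinv

lemma norm_mittagLefflerKernel_le_of_sin_ne_zero {θ : ℝ} (hs : Real.sin (α * θ) ≠ 0) (y : ℝ) :
    ‖mittagLefflerKernel α c (y + θ * I)‖ ≤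
      Real.exp (-(α * c)) / |Real.sin (α * θ)| *
        Real.exp (Real.exp y * Real.cos θ + α * y) := by
  have hden : Real.exp (-(α * (y - c))) * |Real.sin (α * θ)| ≤
      ‖1 - Complex.exp (-(α * ((y : ℂ) + θ * I - c)))‖ := by
    refine le_trans (le_of_eq ?_) (Complex.abs_im_le_norm _)
    simp [Complex.exp_im, abs_mul]
  refine (norm_mittagLefflerKernel_le_of_le (by positivity) hden).trans_eq ?_
  have hre : ((y : ℂ) + θ * I).re = y := by simp
  have him : ((y : ℂ) + θ * I).im = θ := by simp
  rw [Complex.norm_exp, Complex.exp_re, hre, him, mul_inv, ← Real.exp_neg, div_mul_eq_mul_div,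
    ← Real.exp_add, div_eq_mul_inv, ← mul_assoc, ← Real.exp_add]
  ring_nf

lemma norm_rayJump_mittagLefflerKernel_le (hs : Real.sin (α * π) ≠ 0) (y : ℝ) :
    ‖rayJump (mittagLefflerKernel α c) y‖ ≤
      2 * Real.exp (-(α * c)) / |Real.sin (α * π)| * Real.exp (-Real.exp y + α * y) := by
  have hupper := norm_mittagLefflerKernel_le_of_sin_ne_zero (c := c) hs y
  have hlower := norm_mittagLefflerKernel_le_of_sin_ne_zero (c := c) (θ := -π) (by simpa) y
  rw [mul_neg α, Real.sin_neg, abs_neg, Real.cos_neg] at hlower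
  rw [Real.cos_pi, mul_neg_one] at hupper hlower
  refine (norm_rayJump_le _ _).trans ((add_le_add hupper hlower).trans_eq ?_)
  ring

lemma integrable_rayJump_mittagLefflerKernel (hα : 0 < α) (hs : Real.sin (α * π) ≠ 0) (c : ℝ) :
    Integrable (rayJump (mittagLefflerKernel α c)) := by
  have hmeas : Measurable (rayJump (mittagLefflerKernel α c)) := by
    unfold rayJump mittagLefflerKernel
    fun_prop
  exact ((integrable_exp_neg_exp_add_mul hα).const_mul _).mono' hmeas.aestronglyMeasurable
    (Eventually.of_forall (norm_rayJump_mittagLefflerKernel_le hs))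

lemma rayJump_mittagLefflerKernel_one (c y : ℝ) : rayJump (mittagLefflerKernel 1 c) y = 0 := by
  have hperiodic : (mittagLefflerKernel 1 c).Periodic (2 * π * I) := by
    intro w
    have harg : -(((1 : ℝ) : ℂ) * (w + 2 * π * I - c)) =
        -(((1 : ℝ) : ℂ) * (w - c)) - 2 * π * I := by
      push_cast
      ring
    rw [mittagLefflerKernel, mittagLefflerKernel, harg, Complex.exp_periodic,
      Complex.exp_periodic.sub_eq]
  have hshift : (y : ℂ) + π * I = y + (-π : ℝ) * I + 2 * π * I := by
    push_cast
    ring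
  rw [rayJump, hshift, hperiodic, sub_self]

lemma rayJump_mittagLefflerKernel_sub_smul_one (α c : ℝ) (a : ℂ) :
    rayJump (fun w => mittagLefflerKernel α c w - a • mittagLefflerKernel 1 c w) =
      rayJump (mittagLefflerKernel α c) := by
  funext y
  have hone := rayJump_mittagLefflerKernel_one c y
  rw [rayJump] at hone
  rw [rayJump, sub_sub_sub_comm, ← smul_sub, hone, smul_zero, sub_zero, rayJump]

lemma exists_differentiableOn_eq_mittagLefflerKernel_sub (hα0 : α ≠ 0) (hα2 : |α| < 2) (c : ℝ) :
    ∃ Ψ : ℂ → ℂ, DifferentiableOn ℂ Ψ {w | |w.im| ≤ π} ∧ ∀ w : ℂ, w ≠ c →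
      Ψ w = mittagLefflerKernel α c w - (α : ℂ)⁻¹ • mittagLefflerKernel 1 c w := by
  obtain ⟨g, hgd, hg⟩ := exists_differentiableOn_eq_inv_one_sub_exp_sub hα0 hα2
  refine ⟨fun w => Complex.exp (Complex.exp w) * g (w - c), DifferentiableOn.mul (by fun_prop)
    (hgd.comp (by fun_prop) fun w (hw : |w.im| ≤ π) => by simpa using hw), fun w hw => ?_⟩
  simp only [hg _ (sub_ne_zero.2 hw), mittagLefflerKernel, smul_eq_mul, Complex.ofReal_one, one_mul]
  ring

lemma hankelIntegral_mittagLefflerKernel_sub_smul_one (hα0 : 0 < α) (hα2 : α < 2)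
    (hint : Integrable (rayJump (mittagLefflerKernel α c))) {L : ℝ} (hL : c < L) :
    hankelIntegral L (fun w => mittagLefflerKernel α c w - (α : ℂ)⁻¹ • mittagLefflerKernel 1 c w) =
      ∫ y, rayJump (mittagLefflerKernel α c) y := by
  obtain ⟨Ψ, hΨd, hΨ⟩ := exists_differentiableOn_eq_mittagLefflerKernel_sub hα0.ne'
    ((abs_of_pos hα0).trans_lt hα2) c
  have hjump : rayJump Ψ = rayJump (mittagLefflerKernel α c) := by
    rw [← rayJump_mittagLefflerKernel_sub_smul_one α c (α : ℂ)⁻¹]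
    exact rayJump_congr fun w hw => hΨ w fun h => hw (by simp [h])
  have hbound := (tendsto_mittagLefflerKernel_bound_atBot hα0 c).add
    ((tendsto_mittagLefflerKernel_bound_atBot one_pos c).const_mul α⁻¹)
  rw [mul_zero, add_zero] at hbound
  rw [← hankelIntegral_congr fun w hw => hΨ w fun h => hL.not_ge (by simpa [h] using hw), ← hjump]
  refine hankelIntegral_eq_integral_rayJump hΨd (hjump ▸ hint) hbound ?_
  filter_upwards [eventually_lt_atBot c] with x hx θ _
  have hre : ((x : ℂ) + θ * I).re = x := by simp
  rw [hΨ _ fun h => hx.ne (by simpa using congrArg Complex.re h)]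
  refine (norm_sub_le _ _).trans ?_
  rw [norm_smul, norm_inv, Complex.norm_of_nonneg hα0.le]
  gcongr
  · simpa only [hre] using norm_mittagLefflerKernel_le_of_re_lt hα0 (hre.trans_lt hx)
  · simpa only [hre] using norm_mittagLefflerKernel_le_of_re_lt one_pos (hre.trans_lt hx)

theorem mittagLeffler_sub_exp_eq_integral_rayJump (hα0 : 0 < α) (hα2 : α < 2)
    (hs : Real.sin (α * π) ≠ 0) (c : ℝ) :
    2 * π * I * ((mittagLeffler α (Real.exp (α * c)) - α⁻¹ * Real.exp (Real.exp c) : ℝ) : ℂ) =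
      ∫ y, rayJump (mittagLefflerKernel α c) y := by
  have hL : c < c + 1 := lt_add_one c
  have hone := hankelIntegrable_mittagLefflerKernel one_pos hL
  rw [← hankelIntegral_mittagLefflerKernel_sub_smul_one hα0 hα2
      (integrable_rayJump_mittagLefflerKernel hα0 hs c) hL,
    hankelIntegral_sub (hankelIntegrable_mittagLefflerKernel hα0 hL) (hone.smul _),
    hankelIntegral_smul, hankelIntegral_mittagLefflerKernel hα0 hL,
    hankelIntegral_mittagLefflerKernel one_pos hL, one_mul, mittagLeffler_one]
  push_cast
  rw [smul_eq_mul]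
  ring

theorem abs_mittagLeffler_sub_exp_le (hα0 : 0 < α) (hα2 : α < 2) (hs : Real.sin (α * π) ≠ 0)
    {r : ℝ} (hr : 0 < r) :
    |mittagLeffler α r - 1 / α * Real.exp (r ^ (1 / α))| ≤
      Real.Gamma α / (π * |Real.sin (α * π)|) / r := by
  set c := Real.log r / α with hc
  have hexp : Real.exp (α * c) = r := by rw [hc, mul_div_cancel₀ _ hα0.ne', Real.exp_log hr]
  have hrpow : Real.exp c = r ^ (1 / α) := by rw [Real.rpow_def_of_pos hr, mul_one_div]
  have hle := norm_rayJump_mittagLefflerKernel_le (c := c) hs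
  have hdom := (integrable_exp_neg_exp_add_mul hα0).const_mul
    (2 * Real.exp (-(α * c)) / |Real.sin (α * π)|)
  have h := norm_integral_le_of_norm_le hdom (Eventually.of_forall hle)
  rw [← mittagLeffler_sub_exp_eq_integral_rayJump hα0 hα2 hs, integral_const_mul,
    integral_exp_neg_exp_add_mul hα0, norm_mul, Complex.norm_real, Real.exp_neg, hexp, hrpow,
    Real.norm_eq_abs, ← one_div α] at h
  have htwo : ‖2 * (π : ℂ) * I‖ = 2 * π := by simp [abs_pi]
  rw [htwo, mul_comm, ← le_div_iff₀ (by positivity)] at h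
  refine h.trans_eq ?_
  field_simp

lemma sin_mul_pi_ne_zero (hα0 : 0 < α) (hα2 : α < 2) (hα1 : α ≠ 1) : Real.sin (α * π) ≠ 0 := by
  intro h
  obtain ⟨n, hn⟩ := Real.sin_eq_zero_iff.1 h
  obtain rfl : (n : ℝ) = α := mul_right_cancel₀ pi_ne_zero hn
  norm_cast at hα0 hα2 hα1
  omega

theorem mittagLeffler_asymp_top_general (α : ℝ) (hα0 : 0 < α) (hα2 : α < 2) :
    ∃ C > (0 : ℝ), ∃ R > (0 : ℝ), ∀ r : ℝ, R ≤ r →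
      |mittagLeffler α r - (1 / α) * Real.exp (r ^ (1 / α))| ≤ C / r := by
  rcases eq_or_ne α 1 with rfl | hα1
  · refine ⟨1, one_pos, 1, one_pos, fun r hr => ?_⟩
    simpa [mittagLeffler_one] using zero_le_one.trans hr
  · have hs := sin_mul_pi_ne_zero hα0 hα2 hα1
    exact ⟨Real.Gamma α / (π * |Real.sin (α * π)|), by positivity, 1, one_pos,
      fun r hr => abs_mittagLeffler_sub_exp_le hα0 hα2 hs (one_pos.trans_le hr)⟩

end MittagLeffler

theorem mittagLeffler_asymp_top (α : ℝ) (hα : 0 < α) (hα1 : α < 1) :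
    ∃ C > (0 : ℝ), ∃ R > (0 : ℝ), ∀ r : ℝ, R ≤ r →
      |mittagLeffler α r - (1 / α) * Real.exp (r ^ (1 / α))| ≤ C / r :=
  mittagLeffler_asymp_top_general α hα (hα1.trans one_lt_two)
end

section
/- Let 1/2 ≤ α ≤ 1 and r ≥ 0. Then E_α(r) ≤ E_{α,α}(r) + 1 − 1/Γ(α) + (1/Γ(1+α) − 1/Γ(2α))·r. -/
open Real

/-!
`E_α` and `E_{α,α}` are the cases `γ = 1` and `β = α` of `E_{α,γ}` and `E_{α,β}`, whose difference
has coefficients `1/Γ(γ+kα) - 1/Γ(β+kα)`. If `β ≤ γ` and `Γ(β+nα) ≤ Γ(γ+nα)`, then convexity of `Γ`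
carries the latter inequality over to every `k ≥ n`, so the tail of the difference from index `n` on
is nonpositive. For `n = 2` the inequality needed is `Γ(3α) ≤ Γ(1+2α)`, and it holds because
`1 ≤ 3α ≤ 1+2α` and `2 ≤ 1+2α`, while `Γ ≤ 1` on `[1, 2]` and `Γ` increases from `1` on `[2, ∞)`.
-/

open Filter Set

theorem convexOn_apply_add_le_apply_add {𝕜 E : Type*} [Field 𝕜] [LinearOrder 𝕜]
    [IsStrictOrderedRing 𝕜] [AddCommGroup E] [LinearOrder E] [IsOrderedAddMonoid E] [Module 𝕜 E]
    [IsStrictOrderedModule 𝕜 E] {s : Set 𝕜} {f : 𝕜 → E} (hf : ConvexOn 𝕜 s f) {x y t : 𝕜}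
    (hx : x ∈ s) (hyt : y + t ∈ s) (hxy : x ≤ y) (ht : 0 ≤ t) (h : f x ≤ f y) :
    f (x + t) ≤ f (y + t) := by
  rcases hxy.eq_or_lt with rfl | hlt
  · rfl
  have hy_le : f y ≤ f (y + t) :=
    hf.le_right_of_left_le'' hx hyt hlt (le_add_of_nonneg_right ht) h
  calc f (x + t) ≤ max (f x) (f (y + t)) :=
        hf.le_max_of_mem_Icc hx hyt ⟨le_add_of_nonneg_right ht, by gcongr⟩
    _ = f (y + t) := max_eq_right (h.trans hy_le)

section Gamma

variable {x y a : ℝ}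

theorem Gamma_le_one_of_mem_Icc (hx : x ∈ Icc 1 2) : Gamma x ≤ 1 := by
  simpa only [Gamma_one, Gamma_two, max_self] using
    convexOn_Gamma.le_max_of_mem_Icc (mem_Ioi.2 one_pos) (mem_Ioi.2 two_pos) hx

theorem Gamma_le_Gamma_of_two_le (hx : 1 ≤ x) (hxy : x ≤ y) (hy : 2 ≤ y) :
    Gamma x ≤ Gamma y := by
  rcases le_total x 2 with hx2 | hx2
  · calc Gamma x ≤ 1 := Gamma_le_one_of_mem_Icc ⟨hx, hx2⟩
      _ = Gamma 2 := Gamma_two.symm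
      _ ≤ Gamma y := Gamma_strictMonoOn_Ici.monotoneOn self_mem_Ici hy hy
  · exact Gamma_strictMonoOn_Ici.monotoneOn hx2 hy hxy

theorem Gamma_add_one_mul_rpow_le (hx : 0 < x) (ha : 0 < a) :
    Gamma (x + 1) * x ^ a ≤ Gamma (x + 1 + a) := by
  have hΓx : 0 < Gamma x := Gamma_pos_of_pos hx
  have hΓx1 : 0 < Gamma (x + 1) := Gamma_pos_of_pos (by positivity)
  have hΓxa : 0 < Gamma (x + 1 + a) := Gamma_pos_of_pos (by positivity)
  have hlog : log (Gamma (x + 1)) - log (Gamma x) = log x := by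
    rw [Gamma_add_one hx.ne', log_mul hx.ne' hΓx.ne', add_sub_cancel_right]
  have hslope : log x ≤ (log (Gamma (x + 1 + a)) - log (Gamma (x + 1))) / a := by
    simpa only [Function.comp_apply, add_sub_cancel_left, div_one, hlog] using
      convexOn_log_Gamma.slope_mono_adjacent (mem_Ioi.2 hx)
        (mem_Ioi.2 (by positivity : 0 < x + 1 + a)) (lt_add_one x) (lt_add_of_pos_right _ ha)
  rw [← log_le_log_iff (by positivity) hΓxa, log_mul hΓx1.ne' (by positivity), log_rpow hx]
  linarith [(le_div_iff₀ ha).1 hslope]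

theorem tendsto_Gamma_add_div_Gamma_atTop (ha : 0 < a) :
    Tendsto (fun x ↦ Gamma (x + a) / Gamma x) atTop atTop := by
  have hrpow : Tendsto (fun x : ℝ ↦ (x - 1) ^ a) atTop atTop :=
    (tendsto_rpow_atTop ha).comp (tendsto_atTop_add_const_right _ _ tendsto_id)
  refine tendsto_atTop_mono' _ ?_ hrpow
  filter_upwards [eventually_gt_atTop 1] with x hx
  rw [le_div_iff₀' (Gamma_pos_of_pos (one_pos.trans hx))]
  simpa only [sub_add_cancel] using Gamma_add_one_mul_rpow_le (sub_pos.2 hx) ha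

end Gamma

/-- The two-parameter Mittag-Leffler (Wiman) function `E_{α,β}(r) = ∑ r^k / Γ(β+kα)`, of which
`mittagLeffler α` and `mittagLefflerAA α` are the cases `β = 1` and `β = α`. A term with `β + kα` a
pole of `Γ` vanishes, in accordance with the entire function `1/Γ`. -/
noncomputable def mittagLefflerTwo (α β r : ℝ) : ℝ :=
  ∑' k : ℕ, r ^ k / Gamma (β + k * α)

section MittagLeffler

variable {α β γ r : ℝ}

theorem summable_mittagLefflerTwo (hα : 0 < α) (β r : ℝ) :
    Summable fun k : ℕ ↦ r ^ k / Gamma (β + k * α) := by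
  have harg : Tendsto (fun k : ℕ ↦ β + k * α) atTop atTop :=
    tendsto_atTop_add_const_left _ _ (tendsto_natCast_atTop_atTop.atTop_mul_const hα)
  refine summable_of_ratio_norm_eventually_le (r := 1 / 2) (by norm_num) ?_
  filter_upwards [harg.eventually_gt_atTop 0,
    ((tendsto_Gamma_add_div_Gamma_atTop hα).comp harg).eventually_ge_atTop (2 * |r|)]
    with k hpos hratio
  have hΓ : 0 < Gamma (β + k * α) := Gamma_pos_of_pos hpos
  have hΓ' : 0 < Gamma (β + k * α + α) := Gamma_pos_of_pos (by positivity)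
  have hgrowth : 2 * |r| * Gamma (β + k * α) ≤ Gamma (β + k * α + α) := (le_div_iff₀ hΓ).1 hratio
  have hsucc : β + (k + 1 : ℕ) * α = β + k * α + α := by push_cast; ring
  rw [hsucc, norm_div, norm_div, norm_pow, norm_pow, norm_of_nonneg hΓ.le, norm_of_nonneg hΓ'.le,
    norm_eq_abs, ← mul_div_assoc, div_le_div_iff₀ hΓ' hΓ]
  calc |r| ^ (k + 1) * Gamma (β + k * α)
      = 1 / 2 * |r| ^ k * (2 * |r| * Gamma (β + k * α)) := by ring
    _ ≤ 1 / 2 * |r| ^ k * Gamma (β + k * α + α) := by gcongr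

theorem Gamma_add_natCast_mul_le {n k : ℕ} (hα : 0 ≤ α) (hβγ : β ≤ γ) (hpos : 0 < β + n * α)
    (hΓ : Gamma (β + n * α) ≤ Gamma (γ + n * α)) (hnk : n ≤ k) :
    Gamma (β + k * α) ≤ Gamma (γ + k * α) := by
  obtain ⟨m, rfl⟩ := Nat.exists_eq_add_of_le hnk
  have hshift (c : ℝ) : c + (n + m : ℕ) * α = c + n * α + m * α := by push_cast; ring
  have hm : 0 ≤ m * α := by positivity
  rw [hshift, hshift]
  exact convexOn_apply_add_le_apply_add convexOn_Gamma (mem_Ioi.2 hpos)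
    (mem_Ioi.2 (by linarith)) (by gcongr) hm hΓ

theorem mittagLeffler_le_general {n : ℕ} (hα : 0 < α) (hβγ : β ≤ γ) (hpos : 0 < β + n * α)
    (hΓ : Gamma (β + n * α) ≤ Gamma (γ + n * α)) (hr : 0 ≤ r) :
    mittagLefflerTwo α γ r ≤ mittagLefflerTwo α β r +
      ∑ k ∈ Finset.range n, (1 / Gamma (γ + k * α) - 1 / Gamma (β + k * α)) * r ^ k := by
  have hsβ := summable_mittagLefflerTwo hα β r
  have hsγ := summable_mittagLefflerTwo hα γ r
  have hterm (k : ℕ) : r ^ (k + n) / Gamma (γ + (k + n : ℕ) * α) ≤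
      r ^ (k + n) / Gamma (β + (k + n : ℕ) * α) := by
    have hpos' : 0 < Gamma (β + (k + n : ℕ) * α) :=
      Gamma_pos_of_pos (hpos.trans_le (by gcongr; omega))
    gcongr
    exact Gamma_add_natCast_mul_le hα.le hβγ hpos hΓ (Nat.le_add_left n k)
  have htail := ((summable_nat_add_iff n).2 hsγ).tsum_le_tsum hterm ((summable_nat_add_iff n).2 hsβ)
  rw [mittagLefflerTwo, mittagLefflerTwo, ← hsβ.sum_add_tsum_nat_add n,
    ← hsγ.sum_add_tsum_nat_add n]
  simp only [sub_mul, one_div_mul_eq_div, Finset.sum_sub_distrib]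
  linarith

end MittagLeffler

theorem mittagLeffler_le (α r : ℝ) (hα : 1 / 2 ≤ α) (hα1 : α ≤ 1) (hr : 0 ≤ r) :
    mittagLeffler α r ≤ mittagLefflerAA α r + 1 - 1 / Real.Gamma α +
      (1 / Real.Gamma (1 + α) - 1 / Real.Gamma (2 * α)) * r := by
  have hα0 : 0 < α := by linarith
  have hΓ : Gamma (α + (2 : ℕ) * α) ≤ Gamma (1 + (2 : ℕ) * α) := by
    push_cast
    exact Gamma_le_Gamma_of_two_le (by linarith) (by linarith) (by linarith)
  have h : mittagLeffler α r ≤ mittagLefflerAA α r +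
      ∑ k ∈ Finset.range 2, (1 / Gamma (1 + k * α) - 1 / Gamma (α + k * α)) * r ^ k :=
    mittagLeffler_le_general hα0 hα1 (by positivity) hΓ hr
  simp only [Finset.sum_range_succ, Finset.sum_range_zero, Nat.cast_zero, Nat.cast_one, zero_mul,
    one_mul, zero_add, add_zero, pow_zero, pow_one, mul_one, Gamma_one, div_one, ← two_mul] at h
  linarith
end
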